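/- Kernel-image trace exists for isometries: let τ : U ⊕ K → U ⊕ L be an isometry with blocks [[A,B],[C,D]]. Then there exist linear maps i : L → U and k : K → U such that C = (I - A) ∘ i-adjoint-form, precisely: B = (I - A) ∘ k (B factors through I - A on the left) and C = j ∘ (I - A) for some j : U → L composed appropriately; i.e., range(B) ⊆ range(I - A) and ker(I - A) ⊆ ker(C). -/

import Mathlib

open Matrix

theorem aux_factor {m n p : ℕ} (M : Matrix (Fin m) (Fin n) ℂ) (N : Matrix (Fin p) (Fin n) ℂ)
    (h : ∀ x, N *ᵥ x = 0 → M *ᵥ x = 0) : ∃ J : Matrix (Fin m) (Fin p) ℂ, M = J * N := by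
  have hk : LinearMap.ker N.mulVecLin ≤ LinearMap.ker M.mulVecLin := by
    intro x hx
    simpa using h x (by simpa using hx)
  obtain ⟨g, hg⟩ := LinearMap.exists_extend
    (((LinearMap.ker N.mulVecLin).liftQ M.mulVecLin hk).comp
      N.mulVecLin.quotKerEquivRange.symm.toLinearMap)
  refine ⟨LinearMap.toMatrix' g, ?_⟩
  apply Matrix.toLin'.injective
  apply LinearMap.ext
  intro x
  have h1 := LinearMap.congr_fun hg ⟨N.mulVecLin x, LinearMap.mem_range_self _ x⟩
  have h2 := N.mulVecLin.quotKerEquivRange_symm_apply_image x (LinearMap.mem_range_self _ x)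
  simp only [LinearMap.comp_apply, LinearEquiv.coe_coe, h2] at h1
  rw [Matrix.toLin'_mul, LinearMap.comp_apply, Matrix.toLin'_toMatrix']
  simpa using h1.symm

theorem aux_dot {m n : ℕ} (M : Matrix (Fin m) (Fin n) ℂ) (x : Fin n → ℂ) (y : Fin m → ℂ) :
    star (M *ᵥ x) ⬝ᵥ y = star x ⬝ᵥ (Mᴴ *ᵥ y) := by
  rw [star_mulVec, dotProduct_mulVec]

/-- The kernel-image trace exists for isometries: B factors through I - A on the left
and C factors through I - A on the right. -/
theorem stmt16 {u k l : ℕ}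
    (A : Matrix (Fin u) (Fin u) ℂ) (B : Matrix (Fin u) (Fin k) ℂ)
    (C : Matrix (Fin l) (Fin u) ℂ) (D : Matrix (Fin l) (Fin k) ℂ)
    (hiso : (fromBlocks A B C D)ᴴ * fromBlocks A B C D = 1) :
    (∃ K : Matrix (Fin u) (Fin k) ℂ, B = (1 - A) * K) ∧
    (∃ J : Matrix (Fin l) (Fin u) ℂ, C = J * (1 - A)) := by
  rw [fromBlocks_conjTranspose, fromBlocks_multiply, ← fromBlocks_one, fromBlocks_inj] at hiso
  obtain ⟨h1, -, h3, -⟩ := hiso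
  have hn : ∀ x, star (A *ᵥ x) ⬝ᵥ (A *ᵥ x) + star (C *ᵥ x) ⬝ᵥ (C *ᵥ x) = star x ⬝ᵥ x := by
    intro x
    rw [aux_dot, aux_dot, mulVec_mulVec, mulVec_mulVec, ← dotProduct_add, ← add_mulVec, h1,
      one_mulVec]
  constructor
  · obtain ⟨J, hJ⟩ := aux_factor Bᴴ (1 - A)ᴴ (by
      intro x hx
      have hx : Aᴴ *ᵥ x = x := by
        rw [conjTranspose_sub, conjTranspose_one, sub_mulVec, one_mulVec, sub_eq_zero] at hx
        exact hx.symm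
      have e1 : star (A *ᵥ x) ⬝ᵥ x = star x ⬝ᵥ x := by rw [aux_dot, hx]
      have e2 : star x ⬝ᵥ (A *ᵥ x) = star x ⬝ᵥ x := by
        have := aux_dot Aᴴ x x
        rw [hx, conjTranspose_conjTranspose] at this
        exact this.symm
      have e3 : star (A *ᵥ x - x) ⬝ᵥ (A *ᵥ x - x) + star (C *ᵥ x) ⬝ᵥ (C *ᵥ x) = 0 := by
        rw [star_sub, sub_dotProduct, dotProduct_sub, dotProduct_sub, e1, e2]
        linear_combination hn x
      open scoped ComplexOrder in
      rw [add_eq_zero_iff_of_nonneg (dotProduct_star_self_nonneg _)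
        (dotProduct_star_self_nonneg _), dotProduct_star_self_eq_zero,
        dotProduct_star_self_eq_zero, sub_eq_zero] at e3
      have e4 := congrArg (· *ᵥ x) h3
      simpa only [add_mulVec, ← mulVec_mulVec, e3.1, e3.2, mulVec_zero, add_zero,
        zero_mulVec] using e4)
    refine ⟨Jᴴ, ?_⟩
    have := congrArg conjTranspose hJ
    rwa [conjTranspose_mul, conjTranspose_conjTranspose, conjTranspose_conjTranspose] at this
  · apply aux_factor
    intro x hx
    rw [sub_mulVec, one_mulVec, sub_eq_zero] at hx
    have := hn x
    rw [← hx, add_eq_left] at this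
    open scoped ComplexOrder in
    exact dotProduct_star_self_eq_zero.1 this
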